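/- arXiv:math/9911137 — 2 statements merged into one kernel-verified Lean document; each statement's English description precedes it below -/
import Mathlib

section
/- For a two-sided coherent ring R the following are equivalent: (1) R is weakly quasi-Frobenius; (2) both the left module _RR and the right module R_R are FP-injective; (3) _RR and R_R are FP-cogenerators (on their respective sides); (4) the right module R_R is an FP-injective FP-cogenerator; (5) every finitely presented left R-module and every finitely presented right R-module is reflexive; (6) every cyclic finitely presented left R-module and every cyclic finitely presented right R-module is reflexive; (7) every cyclic finitely presented left R-module and every cyclic finitely presented right R-module embeds in a free module; (8) for every finitely generated left ideal I and every finitely generated right ideal J of R one has l(r(I)) = I and r(l(J)) = J. -/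
/-!
Common definitions: rings are associative with identity, not necessarily commutative.
Left `R`-modules are `Module R M`; right `R`-modules are `Module Rᵐᵒᵖ M`.
-/

universe u

open MulOpposite Function Pointwise

section Defs

variable (R : Type u) [Ring R]

/-- Defining relations of the tensor product `K ⊗_R M` of a right `R`-module `K`
and a left `R`-module `M`, inside the free abelian group on `K × M`. -/
def TensorRels (K M : Type u) [AddCommGroup K] [Module Rᵐᵒᵖ K]
    [AddCommGroup M] [Module R M] : AddSubgroup (FreeAbelianGroup (K × M)) :=
  AddSubgroup.closure
    ({x | ∃ k₁ k₂ m, x = FreeAbelianGroup.of (k₁ + k₂, m) - FreeAbelianGroup.of (k₁, m) -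
        FreeAbelianGroup.of (k₂, m)} ∪
     {x | ∃ k m₁ m₂, x = FreeAbelianGroup.of (k, m₁ + m₂) - FreeAbelianGroup.of (k, m₁) -
        FreeAbelianGroup.of (k, m₂)} ∪
     {x | ∃ (r : R) (k : K) (m : M),
        x = FreeAbelianGroup.of (op r • k, m) - FreeAbelianGroup.of (k, r • m)})

/-- The tensor product `K ⊗_R M` of a right `R`-module `K` and a left `R`-module `M`
over the (not necessarily commutative) ring `R`, as an abelian group. -/
def NCTensor (K M : Type u) [AddCommGroup K] [Module Rᵐᵒᵖ K]
    [AddCommGroup M] [Module R M] : Type u :=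
  FreeAbelianGroup (K × M) ⧸ TensorRels R K M

instance (K M : Type u) [AddCommGroup K] [Module Rᵐᵒᵖ K] [AddCommGroup M] [Module R M] :
    AddCommGroup (NCTensor R K M) :=
  QuotientAddGroup.Quotient.addCommGroup _

/-- The map `μ ⊗ ν : K ⊗_R M → K' ⊗_R M'` induced by a map `μ` of right `R`-modules
and a map `ν` of left `R`-modules. -/
def tensorCongr {K K' M M' : Type u} [AddCommGroup K] [Module Rᵐᵒᵖ K]
    [AddCommGroup K'] [Module Rᵐᵒᵖ K'] [AddCommGroup M] [Module R M]
    [AddCommGroup M'] [Module R M'] (μ : K →ₗ[Rᵐᵒᵖ] K') (ν : M →ₗ[R] M') :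
    NCTensor R K M →+ NCTensor R K' M' :=
  QuotientAddGroup.map (TensorRels R K M) (TensorRels R K' M')
    (FreeAbelianGroup.lift fun p : K × M => FreeAbelianGroup.of (μ p.1, ν p.2))
    (by
      refine (AddSubgroup.closure_le _).2 ?_
      rintro x ((⟨k₁, k₂, m, rfl⟩ | ⟨k, m₁, m₂, rfl⟩) | ⟨r, k, m, rfl⟩) <;>
        refine AddSubgroup.mem_comap.2 (AddSubgroup.subset_closure ?_)
      · exact Or.inl <| Or.inl ⟨μ k₁, μ k₂, ν m, by simp [map_add]⟩
      · exact Or.inl <| Or.inr ⟨μ k, ν m₁, ν m₂, by simp [map_add]⟩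
      · exact Or.inr ⟨r, μ k, ν m, by simp [map_smul]⟩)

/-- A left `R`-module `M` is flat if `μ ⊗ M` is injective for every injective
homomorphism `μ` of right `R`-modules. -/
def ModFlat (M : Type u) [AddCommGroup M] [Module R M] : Prop :=
  ∀ (K L : Type u) [AddCommGroup K] [Module Rᵐᵒᵖ K] [AddCommGroup L] [Module Rᵐᵒᵖ L]
    (μ : K →ₗ[Rᵐᵒᵖ] L), Injective μ →
      Injective (tensorCongr R μ (LinearMap.id : M →ₗ[R] M))

/-- A right `R`-module `M` is flat if `M ⊗ μ` is injective for every injective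
homomorphism `μ` of left `R`-modules. -/
def ModFlatRight (M : Type u) [AddCommGroup M] [Module Rᵐᵒᵖ M] : Prop :=
  ∀ (K L : Type u) [AddCommGroup K] [Module R K] [AddCommGroup L] [Module R L]
    (μ : K →ₗ[R] L), Injective μ →
      Injective (tensorCongr R (LinearMap.id : M →ₗ[Rᵐᵒᵖ] M) μ)

/-- A left `R`-module `M` is fp-flat if `μ ⊗ M` is injective for every injective
homomorphism `μ` of finitely presented right `R`-modules. -/
def FpFlat (M : Type u) [AddCommGroup M] [Module R M] : Prop :=
  ∀ (K L : Type u) [AddCommGroup K] [Module Rᵐᵒᵖ K] [AddCommGroup L] [Module Rᵐᵒᵖ L],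
    Module.FinitePresentation Rᵐᵒᵖ K → Module.FinitePresentation Rᵐᵒᵖ L →
    ∀ (μ : K →ₗ[Rᵐᵒᵖ] L), Injective μ →
      Injective (tensorCongr R μ (LinearMap.id : M →ₗ[R] M))

/-- A right `R`-module `M` is fp-flat if `M ⊗ μ` is injective for every injective
homomorphism `μ` of finitely presented left `R`-modules. -/
def FpFlatRight (M : Type u) [AddCommGroup M] [Module Rᵐᵒᵖ M] : Prop :=
  ∀ (K L : Type u) [AddCommGroup K] [Module R K] [AddCommGroup L] [Module R L],
    Module.FinitePresentation R K → Module.FinitePresentation R L →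
    ∀ (μ : K →ₗ[R] L), Injective μ →
      Injective (tensorCongr R (LinearMap.id : M →ₗ[Rᵐᵒᵖ] M) μ)

/-- `Ext¹_R(F, M) = 0`. -/
def ExtVanish (F M : Type u) [AddCommGroup F] [Module R F] [AddCommGroup M] [Module R M] :
    Prop :=
  Subsingleton
    (((Ext ℤ (ModuleCat.{u} R) 1).obj (Opposite.op (ModuleCat.of R F))).obj (ModuleCat.of R M))

/-- A left `R`-module `M` is FP-injective (absolutely pure) if `Ext¹_R(F, M) = 0` for
every finitely presented left `R`-module `F`. -/
def FPInjective (M : Type u) [AddCommGroup M] [Module R M] : Prop :=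
  ∀ (F : Type u) [AddCommGroup F] [Module R F], Module.FinitePresentation R F → ExtVanish R F M

/-- A left `R`-module `M` is fp-injective if for every injective homomorphism `μ : K → L`
of finitely presented left `R`-modules, the induced map `Hom(L, M) → Hom(K, M)` is
surjective. -/
def FpInjective (M : Type u) [AddCommGroup M] [Module R M] : Prop :=
  ∀ (K L : Type u) [AddCommGroup K] [Module R K] [AddCommGroup L] [Module R L],
    Module.FinitePresentation R K → Module.FinitePresentation R L →
    ∀ (μ : K →ₗ[R] L), Injective μ → ∀ f : K →ₗ[R] M, ∃ g : L →ₗ[R] M, g ∘ₗ μ = f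

/-- A left `R`-module `K` is an FP-cogenerator if for every nonzero homomorphism
`f : M → N` from a finitely generated module `M` to a finitely presented module `N`
there is `g : N → K` with `g ∘ f ≠ 0`. -/
def IsFPCogenerator (K : Type u) [AddCommGroup K] [Module R K] : Prop :=
  ∀ (M N : Type u) [AddCommGroup M] [Module R M] [AddCommGroup N] [Module R N],
    Module.Finite R M → Module.FinitePresentation R N →
    ∀ f : M →ₗ[R] N, f ≠ 0 → ∃ g : N →ₗ[R] K, g ∘ₗ f ≠ 0

/-- A left `R`-module `K` is a cogenerator if for every nonzero homomorphism `f : M → N`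
of left `R`-modules there is `g : N → K` with `g ∘ f ≠ 0`. -/
def IsCogenerator (K : Type u) [AddCommGroup K] [Module R K] : Prop :=
  ∀ (M N : Type u) [AddCommGroup M] [Module R M] [AddCommGroup N] [Module R N],
    ∀ f : M →ₗ[R] N, f ≠ 0 → ∃ g : N →ₗ[R] K, g ∘ₗ f ≠ 0

/-- The canonical evaluation map `M → M** = Hom(Hom(M, R), R)` for a left `R`-module `M`;
here `M* = Hom_R(M, R)` is a right `R`-module. -/
def dualEval (M : Type u) [AddCommGroup M] [Module R M] :
    M →ₗ[R] ((M →ₗ[R] R) →ₗ[Rᵐᵒᵖ] R) where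
  toFun m :=
    { toFun := fun f => f m
      map_add' := fun f g => rfl
      map_smul' := fun r f => rfl }
  map_add' m m' := LinearMap.ext fun f => f.map_add m m'
  map_smul' r m := LinearMap.ext fun f => by simp [f.map_smul]

/-- The canonical evaluation map `M → M** = Hom(Hom(M, R), R)` for a right `R`-module `M`;
here `M* = Hom_R(M, R)` is a left `R`-module. -/
def dualEvalRight (M : Type u) [AddCommGroup M] [Module Rᵐᵒᵖ M] :
    M →ₗ[Rᵐᵒᵖ] ((M →ₗ[Rᵐᵒᵖ] R) →ₗ[R] R) where
  toFun m :=
    { toFun := fun f => f m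
      map_add' := fun f g => rfl
      map_smul' := fun r f => rfl }
  map_add' m m' := LinearMap.ext fun f => f.map_add m m'
  map_smul' r m := LinearMap.ext fun f => by simp [f.map_smul]

/-- The left annihilator of a subset `X ⊆ R`. -/
def lAnn (X : Set R) : Set R := {a | ∀ x ∈ X, a * x = 0}

/-- The right annihilator of a subset `X ⊆ R`. -/
def rAnn (X : Set R) : Set R := {a | ∀ x ∈ X, x * a = 0}

/-- `R` is left coherent: every finitely generated left ideal is finitely presented. -/
def LeftCoherent : Prop :=
  ∀ I : Submodule R R, I.FG → Module.FinitePresentation R I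

/-- `R` is right coherent: every finitely generated right ideal is finitely presented. -/
def RightCoherent : Prop :=
  ∀ I : Submodule Rᵐᵒᵖ R, I.FG → Module.FinitePresentation Rᵐᵒᵖ I

/-- A left `R`-module `M` embeds in a free left `R`-module. -/
def EmbedsInFree (M : Type u) [AddCommGroup M] [Module R M] : Prop :=
  ∃ (ι : Type u) (f : M →ₗ[R] (ι →₀ R)), Injective f

/-- A right `R`-module `M` embeds in a free right `R`-module. -/
def EmbedsInFreeRight (M : Type u) [AddCommGroup M] [Module Rᵐᵒᵖ M] : Prop :=
  ∃ (ι : Type u) (f : M →ₗ[Rᵐᵒᵖ] (ι →₀ R)), Injective f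

/-- `R` is a left IF-ring: every finitely presented left `R`-module embeds in a free module. -/
def LeftIF : Prop :=
  ∀ (M : Type u) [AddCommGroup M] [Module R M],
    Module.FinitePresentation R M → EmbedsInFree R M

/-- `R` is a right IF-ring: every finitely presented right `R`-module embeds in a free module. -/
def RightIF : Prop :=
  ∀ (M : Type u) [AddCommGroup M] [Module Rᵐᵒᵖ M],
    Module.FinitePresentation Rᵐᵒᵖ M → EmbedsInFreeRight R M

/-- A module is cyclic if it is generated by one element. -/
def CyclicModule (M : Type u) [AddCommGroup M] [Module R M] : Prop :=
  ∃ m : M, Submodule.span R {m} = ⊤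

/-- `R` is a left CF-ring: every cyclic left `R`-module embeds in a free module. -/
def LeftCF : Prop :=
  ∀ (M : Type u) [AddCommGroup M] [Module R M], CyclicModule R M → EmbedsInFree R M

/-- `R` is a left FGF-ring: every finitely generated left `R`-module embeds in a free module. -/
def LeftFGF : Prop :=
  ∀ (M : Type u) [AddCommGroup M] [Module R M], Module.Finite R M → EmbedsInFree R M

/-- `R` is a left Kasch ring: `Hom_R(M, R) ≠ 0` for every nonzero cyclic left `R`-module. -/
def LeftKasch : Prop :=
  ∀ (M : Type u) [AddCommGroup M] [Module R M],
    CyclicModule R M → Nontrivial M → ∃ f : M →ₗ[R] R, f ≠ 0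

/-- `R` is a right Kasch ring: `Hom_R(M, R) ≠ 0` for every nonzero cyclic right `R`-module. -/
def RightKasch : Prop :=
  ∀ (M : Type u) [AddCommGroup M] [Module Rᵐᵒᵖ M],
    CyclicModule Rᵐᵒᵖ M → Nontrivial M → ∃ f : M →ₗ[Rᵐᵒᵖ] R, f ≠ 0

/-- The socle of a module: the sum of all its simple submodules. -/
def socle (M : Type u) [AddCommGroup M] [Module R M] : Submodule R M :=
  sSup {N : Submodule R M | IsSimpleModule R N}

/-- `R` is left semiartinian: every nonzero cyclic left `R`-module has a nonzero socle. -/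
def LeftSemiartinian : Prop :=
  ∀ (M : Type u) [AddCommGroup M] [Module R M],
    CyclicModule R M → Nontrivial M → socle R M ≠ ⊥

/-- A submodule `N ⊆ M` is essential if it meets every nonzero submodule nontrivially. -/
def EssentialSub {M : Type u} [AddCommGroup M] [Module R M] (N : Submodule R M) : Prop :=
  ∀ P : Submodule R M, P ≠ ⊥ → N ⊓ P ≠ ⊥

/-- `R` is semiregular: `R/rad R` is von Neumann regular,
where `rad R` is the Jacobson radical. -/
def Semiregular : Prop :=
  ∀ a : R, ∃ x : R, a - a * x * a ∈ Ideal.jacobson (⊥ : Ideal R)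

/-- `R` is semiperfect: `R/rad R` is semisimple and idempotents lift modulo `rad R`. -/
def Semiperfect : Prop :=
  IsSemisimpleModule R (R ⧸ Ideal.jacobson (⊥ : Ideal R)) ∧
    ∀ a : R, a * a - a ∈ Ideal.jacobson (⊥ : Ideal R) →
      ∃ e : R, e * e = e ∧ e - a ∈ Ideal.jacobson (⊥ : Ideal R)

/-- A module is indecomposable if it is nonzero and is not the direct sum of two
nonzero submodules. -/
def IndecModule (M : Type u) [AddCommGroup M] [Module R M] : Prop :=
  Nontrivial M ∧ ∀ A B : Submodule R M, IsCompl A B → A = ⊥ ∨ B = ⊥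

/-- `R` is weakly quasi-Frobenius: left and right coherent and left and right FP-injective. -/
def WQF : Prop :=
  LeftCoherent R ∧ RightCoherent R ∧ FPInjective R R ∧ FPInjective Rᵐᵒᵖ R

/-- `R` is quasi-Frobenius: left and right noetherian and left and right self-injective. -/
def QF : Prop :=
  IsNoetherianRing R ∧ IsNoetherian Rᵐᵒᵖ R ∧ Module.Injective R R ∧ Module.Injective Rᵐᵒᵖ R

end Defs

/-- A group is locally finite if every finitely generated subgroup is finite. -/
def LocallyFiniteGroup (G : Type*) [Group G] : Prop :=
  ∀ H : Subgroup G, H.FG → Finite H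


section ExtPart
open CategoryTheory

theorem extVanish_iff_res (A : Type u) [Ring A] (F M : Type u) [AddCommGroup F] [Module A F]
    [AddCommGroup M] [Module A M] (P : ProjectiveResolution (ModuleCat.of A F)) :
    ExtVanish A F M ↔ ∀ f : P.complex.X 1 ⟶ ModuleCat.of A M, P.complex.d 2 1 ≫ f = 0 →
      ∃ g : P.complex.X 0 ⟶ ModuleCat.of A M, P.complex.d 1 0 ≫ g = f := by
  unfold ExtVanish
  rw [← ModuleCat.isZero_iff_subsingleton, (P.isoExt (R := ℤ) 1 (ModuleCat.of A M)).isZero_iff,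
    ← HomologicalComplex.exactAt_iff_isZero_homology,
    HomologicalComplex.exactAt_iff' _ 0 1 2 (by simp) (by simp),
    ShortComplex.moduleCat_exact_iff]
  rfl

theorem exists_good_res (A : Type u) [Ring A] (F M : Type u) [AddCommGroup F] [Module A F]
    [AddCommGroup M] [Module A M] : ∃ (Q : Type u) (_ : AddCommGroup Q) (_ : Module A Q)
      (p : Q →ₗ[A] F), Module.Projective A Q ∧ Surjective p ∧
      (ExtVanish A F M ↔ ∀ f : LinearMap.ker p →ₗ[A] M, ∃ g : Q →ₗ[A] M,
        ∀ k : LinearMap.ker p, g k = f k) := by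
  let P := projectiveResolution (ModuleCat.of A F)
  let p : P.complex.X 0 ⟶ ModuleCat.of A F := P.π.f 0
  have hd : P.complex.d 1 0 ≫ p = 0 := P.complex_d_comp_π_f_zero
  have h1 := P.exact_succ 0
  have h0 : (ShortComplex.mk _ _ hd).Exact :=
    ShortComplex.exact_of_g_is_cokernel _ P.isColimitCokernelCofork
  rw [ShortComplex.moduleCat_exact_iff] at h1 h0
  have hdx : ∀ x, p.hom ((P.complex.d 1 0).hom x) = 0 := fun x =>
    LinearMap.congr_fun (congrArg ModuleCat.Hom.hom hd) x
  refine ⟨P.complex.X 0, inferInstance, inferInstance, p.hom,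
    (IsProjective.iff_projective _).2 (P.projective 0), 
    (ModuleCat.epi_iff_surjective p).1 (inferInstanceAs (Epi (P.π.f 0))), ?_⟩
  rw [extVanish_iff_res A F M P]
  let d : P.complex.X 1 →ₗ[A] LinearMap.ker p.hom :=
    LinearMap.codRestrict _ (P.complex.d 1 0).hom hdx
  have hds : Surjective d := fun ⟨y, hy⟩ => by
    obtain ⟨x, hx⟩ := h0 y hy
    exact ⟨x, Subtype.ext hx⟩
  constructor
  · intro H f
    obtain ⟨g, hg⟩ := H (ModuleCat.ofHom (f ∘ₗ d)) (by
      ext x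
      have : d ((P.complex.d 2 1).hom x) = 0 := Subtype.ext
        (LinearMap.congr_fun (congrArg ModuleCat.Hom.hom (P.complex.d_comp_d 2 1 0)) x)
      change f (d ((P.complex.d 2 1).hom x)) = 0
      rw [this, map_zero])
    refine ⟨g.hom, fun k => ?_⟩
    obtain ⟨x, rfl⟩ := hds k
    exact LinearMap.congr_fun (congrArg ModuleCat.Hom.hom hg) x
  · intro H f hf
    have hk : LinearMap.ker d ≤ LinearMap.ker f.hom := by
      intro x hx
      obtain ⟨y, rfl⟩ := h1 x (congrArg Subtype.val (show d x = 0 from hx))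
      exact LinearMap.congr_fun (congrArg ModuleCat.Hom.hom hf) y
    obtain ⟨g, hg⟩ := H ((LinearMap.ker d).liftQ f.hom hk ∘ₗ
      (d.quotKerEquivOfSurjective hds).symm.toLinearMap)
    refine ⟨ModuleCat.ofHom g, ?_⟩
    ext x
    refine (hg (d x)).trans ?_
    have : (d.quotKerEquivOfSurjective hds).symm (d x) = (LinearMap.ker d).mkQ x := by
      rw [LinearEquiv.symm_apply_eq]; rfl
    simp [this]

end ExtPart

/-- Extension form of FP-injectivity. -/
def Inj (A : Type u) [Ring A] (R : Type u) [AddCommGroup R] [Module A R] : Prop :=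
  ∀ (N : Type u) [AddCommGroup N] [Module A N] (K : Submodule A N),
    Module.FinitePresentation A (N ⧸ K) → ∀ f : K →ₗ[A] R, ∃ g : N →ₗ[A] R, ∀ k : K, g k = f k

/-- Extending along one projective cover suffices. -/
theorem ext_of_proj {A : Type u} [Ring A] {R Q F N : Type u} [AddCommGroup R] [Module A R]
    [AddCommGroup Q] [Module A Q] [AddCommGroup F] [Module A F] [AddCommGroup N] [Module A N]
    [Module.Projective A Q] (p : Q →ₗ[A] F)
    (H : ∀ f : LinearMap.ker p →ₗ[A] R, ∃ g : Q →ₗ[A] R, ∀ k : LinearMap.ker p, g k = f k)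
    (π : N →ₗ[A] F) (hπ : Surjective π) (hp : Surjective p) (f : LinearMap.ker π →ₗ[A] R) :
    ∃ g : N →ₗ[A] R, ∀ k : LinearMap.ker π, g k = f k := by
  obtain ⟨φ, hφ⟩ := Module.projective_lifting_property π p hπ
  have hφ' : ∀ q, π (φ q) = p q := fun q => LinearMap.congr_fun hφ q
  let φ' : LinearMap.ker p →ₗ[A] LinearMap.ker π :=
    LinearMap.codRestrict _ (φ ∘ₗ (LinearMap.ker p).subtype) (fun x => by
      simp [hφ'])
  obtain ⟨h, hh⟩ := H (f ∘ₗ φ')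
  let s : (LinearMap.ker π × Q) →ₗ[A] N := LinearMap.coprod (LinearMap.ker π).subtype φ
  let t : (LinearMap.ker π × Q) →ₗ[A] R := LinearMap.coprod f h
  have hs : Surjective s := fun n => by
    obtain ⟨q, hq⟩ := hp (π n)
    exact ⟨(⟨n - φ q, by simp [hφ', hq]⟩, q), by simp [s]⟩
  have hk : LinearMap.ker s ≤ LinearMap.ker t := by
    rintro ⟨k, q⟩ hx
    have hx' : (k : N) + φ q = 0 := hx
    have hq : p q = 0 := by
      have := congrArg π hx'
      simpa [hφ'] using this
    have h1 : h q = f (φ' ⟨q, hq⟩) := hh ⟨q, hq⟩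
    have h2 : k + φ' ⟨q, hq⟩ = 0 := Subtype.ext hx'
    change f k + h q = 0
    rw [h1, ← map_add, h2, map_zero]
  refine ⟨(LinearMap.ker s).liftQ t hk ∘ₗ (s.quotKerEquivOfSurjective hs).symm.toLinearMap,
    fun k => ?_⟩
  have h3 : (s.quotKerEquivOfSurjective hs).symm (k : N) = (LinearMap.ker s).mkQ (k, 0) := by
    rw [LinearEquiv.symm_apply_eq]
    simp [s]
  simp [h3, t]

theorem fpInjective_iff (A : Type u) [Ring A] (R : Type u) [AddCommGroup R] [Module A R] :
    FPInjective A R ↔ Inj A R := by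
  constructor
  · intro H N _ _ K hK f
    obtain ⟨Q, _, _, p, hQ, hp, h⟩ := exists_good_res A (N ⧸ K) R
    have := ext_of_proj p (h.1 (H _ hK)) K.mkQ K.mkQ_surjective hp
    rw [K.ker_mkQ] at this
    exact this f
  · intro H F _ _ hF
    obtain ⟨Q, _, _, p, hQ, hp, h⟩ := exists_good_res A F R
    exact h.2 (H Q _ (Module.FinitePresentation.of_equiv (p.quotKerEquivOfSurjective hp).symm))

/-- Every finite module embedding in `N` is finitely presented. -/
def Coh (A : Type u) [Ring A] (N : Type u) [AddCommGroup N] [Module A N] : Prop :=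
  ∀ (K : Type u) [AddCommGroup K] [Module A K], Module.Finite A K →
    ∀ i : K →ₗ[A] N, Injective i → Module.FinitePresentation A K

section CohPart
variable {A : Type u} [Ring A] {M N Q : Type u} [AddCommGroup M] [Module A M]
  [AddCommGroup N] [Module A N] [AddCommGroup Q] [Module A Q]

theorem coh_of_fg (H : ∀ I : Submodule A N, I.FG → Module.FinitePresentation A I) : Coh A N := by
  intro K _ _ hK i hi
  have := H (LinearMap.range i) (Module.Finite.iff_fg.1 inferInstance)
  exact Module.FinitePresentation.of_equiv (LinearEquiv.ofInjective i hi).symm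

theorem coh_inj (H : Coh A N) (j : M →ₗ[A] N) (hj : Injective j) : Coh A M :=
  fun K _ _ hK i hi => H K hK (j ∘ₗ i) (hj.comp hi)

theorem Coh.fg_ker (H : Coh A N) [Module.Finite A M] (f : M →ₗ[A] N) : (LinearMap.ker f).FG := by
  have : Module.FinitePresentation A (LinearMap.range f) :=
    H _ inferInstance (LinearMap.range f).subtype Subtype.val_injective
  have h := Module.FinitePresentation.fg_ker f.rangeRestrict f.surjective_rangeRestrict
  rwa [LinearMap.ker_rangeRestrict] at h

theorem coh_prod (hM : Coh A M) (hN : Coh A N) : Coh A (M × N) := by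
  intro K _ _ hK i hi
  let c : K →ₗ[A] N := LinearMap.snd A M N ∘ₗ i
  have h1 : Module.FinitePresentation A (LinearMap.range c) :=
    hN _ inferInstance (LinearMap.range c).subtype Subtype.val_injective
  have h2 : Module.FinitePresentation A (LinearMap.ker c) := by
    refine hM _ (Module.Finite.iff_fg.2 (hN.fg_ker c))
      (LinearMap.fst A M N ∘ₗ i ∘ₗ (LinearMap.ker c).subtype) ?_
    rw [← LinearMap.ker_eq_bot, LinearMap.ker_eq_bot']
    intro x hx
    apply Subtype.ext
    apply hi
    rw [Submodule.coe_zero, map_zero]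
    exact Prod.ext hx x.2
  have h3 : Module.FinitePresentation A (LinearMap.ker c.rangeRestrict) := by
    rwa [LinearMap.ker_rangeRestrict]
  exact Module.finitePresentation_of_ker c.rangeRestrict c.surjective_rangeRestrict

theorem coh_pi (hN : Coh A N) (n : ℕ) : Coh A (Fin n → N) := by
  induction n with
  | zero =>
    intro K _ _ hK i hi
    have : Subsingleton K := hi.subsingleton
    infer_instance
  | succ n ih =>
    exact coh_inj (coh_prod hN ih) (Fin.consLinearEquiv A (fun _ : Fin n.succ => N)).symm.toLinearMap
      (LinearEquiv.injective _)

theorem coh_quot (hM : Coh A M) (π : M →ₗ[A] Q) (hπ : Surjective π)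
    (hk : (LinearMap.ker π).FG) : Coh A Q := by
  intro K _ _ hK i hi
  let N' := (LinearMap.range i).comap π
  have hle : LinearMap.ker π ≤ N' := fun x hx => by
    change π x ∈ LinearMap.range i
    rw [show π x = 0 from hx]; exact zero_mem _
  have hN' : N'.FG := by
    refine Submodule.fg_of_fg_map_of_fg_inf_ker π ?_ ?_
    · rw [Submodule.map_comap_eq_of_surjective hπ]
      exact Module.Finite.iff_fg.1 inferInstance
    · rwa [inf_eq_right.2 hle]
  have h1 : Module.FinitePresentation A N' :=
    hM N' (Module.Finite.iff_fg.2 hN') N'.subtype Subtype.val_injective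
  let q : N' →ₗ[A] Q := π ∘ₗ N'.subtype
  have hq : LinearMap.range q = LinearMap.range i := by
    rw [LinearMap.range_comp, Submodule.range_subtype, Submodule.map_comap_eq_of_surjective hπ]
  have hkq : (LinearMap.ker q).FG := by
    rw [← Submodule.fg_map_iff N'.subtype Subtype.val_injective, LinearMap.ker_comp,
      Submodule.map_comap_subtype, inf_eq_right.2 hle]
    exact hk
  have h2 : Module.FinitePresentation A (LinearMap.range q) :=
    Module.finitePresentation_of_surjective q.rangeRestrict q.surjective_rangeRestrict
      (by rwa [LinearMap.ker_rangeRestrict])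
  rw [hq] at h2
  exact Module.FinitePresentation.of_equiv (LinearEquiv.ofInjective i hi).symm

theorem Coh.inf_fg (hN : Coh A N) (I J : Submodule A N) (hI : I.FG) (hJ : J.FG) : (I ⊓ J).FG := by
  have hq : Coh A (N ⧸ J) := coh_quot hN J.mkQ J.mkQ_surjective (by rwa [J.ker_mkQ])
  have : Module.Finite A I := Module.Finite.iff_fg.2 hI
  have h := (hq.fg_ker (J.mkQ ∘ₗ I.subtype)).map I.subtype
  rwa [LinearMap.ker_comp, Submodule.map_comap_subtype, J.ker_mkQ] at h

end CohPart

/-- Homs to `R` extend from finite submodules of `N`. -/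
def ExtF (A : Type u) [Ring A] (R N : Type u) [AddCommGroup R] [Module A R]
    [AddCommGroup N] [Module A N] : Prop :=
  ∀ (K : Type u) [AddCommGroup K] [Module A K], Module.Finite A K →
    ∀ i : K →ₗ[A] N, Injective i → ∀ f : K →ₗ[A] R, ∃ g : N →ₗ[A] R, ∀ k, g (i k) = f k

section ExtFPart
variable {A : Type u} [Ring A] {R M N Q : Type u} [AddCommGroup R] [Module A R]
  [AddCommGroup M] [Module A M]
  [AddCommGroup N] [Module A N] [AddCommGroup Q] [Module A Q]

theorem extF_inj (H : ExtF A R N) (j : M →ₗ[A] N) (hj : Injective j) : ExtF A R M := by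
  intro K _ _ hK i hi f
  obtain ⟨g, hg⟩ := H K hK (j ∘ₗ i) (hj.comp hi) f
  exact ⟨g ∘ₗ j, hg⟩

/-- Factor a map through the range of another. -/
theorem exists_factor (c : M →ₗ[A] N) (f : M →ₗ[A] R) (h : ∀ x, c x = 0 → f x = 0) :
    ∃ g : LinearMap.range c →ₗ[A] R, ∀ x, g (c.rangeRestrict x) = f x := by
  refine ⟨(LinearMap.ker c).liftQ f h ∘ₗ c.quotKerEquivRange.symm.toLinearMap, fun x => ?_⟩
  have : c.quotKerEquivRange.symm (c.rangeRestrict x) = (LinearMap.ker c).mkQ x := by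
    rw [LinearEquiv.symm_apply_eq]; rfl
  simp only [LinearMap.comp_apply, LinearEquiv.coe_coe, this]
  rfl

theorem extF_prod (hN : Coh A N) (h1 : ExtF A R M) (h2 : ExtF A R N) : ExtF A R (M × N) := by
  intro K _ _ hK i hi f
  let c : K →ₗ[A] N := LinearMap.snd A M N ∘ₗ i
  obtain ⟨g1, hg1⟩ := h1 (LinearMap.ker c) (Module.Finite.iff_fg.2 (hN.fg_ker c))
      (LinearMap.fst A M N ∘ₗ i ∘ₗ (LinearMap.ker c).subtype) (by
        rw [← LinearMap.ker_eq_bot, LinearMap.ker_eq_bot']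
        intro x hx
        apply Subtype.ext
        apply hi
        rw [Submodule.coe_zero, map_zero]
        exact Prod.ext hx x.2) (f ∘ₗ (LinearMap.ker c).subtype)
  obtain ⟨f', hf'⟩ := exists_factor c (f - g1 ∘ₗ LinearMap.fst A M N ∘ₗ i) (fun x hx => by
    have : g1 (i x).1 = f x := hg1 ⟨x, hx⟩
    simp [this])
  obtain ⟨g2, hg2⟩ := h2 (LinearMap.range c) inferInstance (LinearMap.range c).subtype
    Subtype.val_injective f'
  refine ⟨g1 ∘ₗ LinearMap.fst A M N + g2 ∘ₗ LinearMap.snd A M N, fun k => ?_⟩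
  have h3 := (hg2 (c.rangeRestrict k)).trans (hf' k)
  have h4 : g2 (i k).2 = f k - g1 (i k).1 := h3
  simp [h4]

theorem extF_pi (hN : Coh A N) (h : ExtF A R N) (n : ℕ) : ExtF A R (Fin n → N) := by
  induction n with
  | zero =>
    intro K _ _ hK i hi f
    have : Subsingleton K := hi.subsingleton
    exact ⟨0, fun k => by rw [Subsingleton.elim k 0]; simp⟩
  | succ n ih =>
    exact extF_inj (extF_prod (coh_pi hN n) h ih)
      (Fin.consLinearEquiv A (fun _ : Fin n.succ => N)).symm.toLinearMap
      (LinearEquiv.injective _)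

theorem inj_of_extF (hA : Coh A A) (h : ExtF A R A) : Inj A R := by
  intro N _ _ K hK f
  obtain ⟨n, m, p, q, hp, hq⟩ := Module.FinitePresentation.exists_fin' A (N ⧸ K)
  have hfg := Module.FinitePresentation.fg_ker p hp
  have := ext_of_proj (R := R) p (fun f => extF_pi hA h n _ (Module.Finite.iff_fg.2 hfg)
    (LinearMap.ker p).subtype Subtype.val_injective f) K.mkQ K.mkQ_surjective hp
  rw [K.ker_mkQ] at this
  exact this f

end ExtFPart


/-- `R` is an `A`-`B` bimodule, free of rank one on `e` on both sides. -/
structure Bal (A B R : Type u) [Ring A] [Ring B] [AddCommGroup R] [Module A R] [Module B R]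
    (e : R) : Prop where
  bijA : Bijective (fun a : A => a • e)
  bijB : Bijective (fun b : B => b • e)

/-- Finitely generated submodules of `R` are double annihilators. -/
def Cyc (A B R : Type u) [Ring A] [Ring B] [AddCommGroup R] [Module A R] [Module B R] : Prop :=
  ∀ I : Submodule A R, I.FG → ∀ x, x ∉ I → ∃ b : B, (∀ y ∈ I, b • y = 0) ∧ b • x ≠ 0

section BalPart
variable {A B R : Type u} [Ring A] [Ring B] [AddCommGroup R] [Module A R] [Module B R]
  [SMulCommClass A B R] [SMulCommClass B A R] {e : R}

theorem Bal.symm (h : Bal A B R e) : Bal B A R e := ⟨h.bijB, h.bijA⟩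

theorem Bal.endo (h : Bal A B R e) (g : R →ₗ[A] R) : ∃ b : B, ∀ x, g x = b • x := by
  obtain ⟨b, hb⟩ := h.bijB.2 (g e)
  refine ⟨b, fun x => ?_⟩
  obtain ⟨a, rfl⟩ := h.bijA.2 x
  have hb' : b • e = g e := hb
  change g (a • e) = b • a • e
  rw [map_smul, ← hb', smul_comm]

/-- The equivalence `A ≃ R`. -/
noncomputable def Bal.equiv (h : Bal A B R e) : A ≃ₗ[A] R :=
  LinearEquiv.ofBijective (LinearMap.toSpanSingleton A R e) h.bijA

theorem Bal.cohRing (h : Bal A B R e) (hR : Coh A R) : Coh A A :=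
  coh_inj hR h.equiv.toLinearMap h.equiv.injective

theorem Bal.fp (h : Bal A B R e) : Module.FinitePresentation A R :=
  Module.FinitePresentation.of_equiv h.equiv

theorem ann_fg (hR : Coh B R) (I : Submodule A R) (hI : I.FG) :
    ∃ J : Submodule B B, J.FG ∧ ∀ b, b ∈ J ↔ ∀ y ∈ I, b • y = 0 := by
  obtain ⟨n, s, rfl⟩ := Submodule.fg_iff_exists_fin_generating_family.1 hI
  refine ⟨LinearMap.ker (LinearMap.pi fun i => LinearMap.toSpanSingleton B R (s i)),
    (coh_pi hR n).fg_ker _, fun b => ?_⟩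
  rw [LinearMap.mem_ker]
  constructor
  · intro hb y hy
    have : Submodule.span A (Set.range s) ≤ LinearMap.ker (DistribSMul.toLinearMap A R b) := by
      rw [Submodule.span_le]
      rintro _ ⟨i, rfl⟩
      exact congrFun hb i
    exact this hy
  · intro hb
    ext i
    exact hb _ (Submodule.subset_span ⟨i, rfl⟩)

theorem ideal_ext (h : Bal A B R e) (hA : Coh A R) (hB : Coh B R) (cA : Cyc A B R)
    (cB : Cyc B A R) (I : Submodule A R) (hI : I.FG) :
    ∀ f : I →ₗ[A] R, ∃ b : B, ∀ x : I, f x = b • (x : R) := by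
  induction I, hI using Submodule.fg_induction with
  | singleton x =>
    intro f
    have hx : x ∈ Submodule.span A {x} := Submodule.mem_span_singleton_self x
    have key : f ⟨x, hx⟩ ∈ Submodule.span B {x} := by
      by_contra hcon
      obtain ⟨a, ha, ha'⟩ := cB _ (Submodule.fg_span_singleton x) _ hcon
      apply ha'
      have h0 : a • (⟨x, hx⟩ : Submodule.span A {x}) = 0 :=
        Subtype.ext (ha x (Submodule.mem_span_singleton_self x))
      rw [← map_smul, h0, map_zero]
    obtain ⟨b, hb⟩ := Submodule.mem_span_singleton.1 key
    refine ⟨b, fun ⟨y, hy⟩ => ?_⟩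
    obtain ⟨a, rfl⟩ := Submodule.mem_span_singleton.1 hy
    have : (⟨a • x, hy⟩ : Submodule.span A {x}) = a • ⟨x, hx⟩ := rfl
    rw [this, map_smul, ← hb]
    exact smul_comm _ _ _
  | sup I I' hI hI' ih ih' =>
    intro f
    obtain ⟨b, hb⟩ := ih (f ∘ₗ Submodule.inclusion le_sup_left)
    obtain ⟨b', hb'⟩ := ih' (f ∘ₗ Submodule.inclusion le_sup_right)
    have hbb : ∀ y, y ∈ I → y ∈ I' → (b - b') • y = 0 := by
      intro y hy hy'
      have h1 := hb ⟨y, hy⟩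
      have h2 := hb' ⟨y, hy'⟩
      rw [sub_smul, sub_eq_zero]
      exact h1.symm.trans h2
    obtain ⟨J, hJ, hJm⟩ := ann_fg (B := B) hB I hI
    obtain ⟨J', hJ', hJm'⟩ := ann_fg (B := B) hB I' hI'
    let t := LinearMap.toSpanSingleton B R e
    have key : t (b - b') ∈ (J ⊔ J').map t := by
      by_contra hcon
      obtain ⟨a, ha, ha'⟩ := cB _ ((hJ.sup hJ').map t) _ hcon
      apply ha'
      have hmem : ∀ (L : Submodule A R), L.FG → (∀ c : B, (∀ y ∈ L, c • y = 0) →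
          c ∈ J ⊔ J') → a • e ∈ L := by
        intro L hL hc
        by_contra hn
        obtain ⟨c, hc1, hc2⟩ := cA L hL _ hn
        apply hc2
        rw [smul_comm]
        exact ha _ ⟨c, hc c hc1, rfl⟩
      have e1 : a • e ∈ I := hmem I hI fun c hc => (le_sup_left : J ≤ J ⊔ J') ((hJm c).2 hc)
      have e2 : a • e ∈ I' := hmem I' hI' fun c hc => (le_sup_right : J' ≤ J ⊔ J') ((hJm' c).2 hc)
      change a • ((b - b') • e) = 0
      rw [smul_comm]
      exact hbb _ e1 e2
    obtain ⟨z, hz, hzt⟩ := key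
    have hz' : z = b - b' := h.bijB.1 hzt
    obtain ⟨c, hc, c', hc', hcc⟩ := Submodule.mem_sup.1 hz
    refine ⟨b - c, fun ⟨y, hy⟩ => ?_⟩
    obtain ⟨u, hu, v, hv, rfl⟩ := Submodule.mem_sup.1 hy
    have hsplit : (⟨u + v, hy⟩ : (I ⊔ I' : Submodule A R)) =
      Submodule.inclusion le_sup_left ⟨u, hu⟩ + Submodule.inclusion le_sup_right ⟨v, hv⟩ := rfl
    have f1 : f (Submodule.inclusion le_sup_left ⟨u, hu⟩) = b • u := hb ⟨u, hu⟩
    have f2 : f (Submodule.inclusion le_sup_right ⟨v, hv⟩) = b' • v := hb' ⟨v, hv⟩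
    have f3 : c • u = 0 := (hJm c).1 hc u hu
    have f4 : c' • v = 0 := (hJm' c').1 hc' v hv
    have f5 : b - c = b' + c' := by
      have : c + c' = b - b' := hcc.trans hz'
      rw [sub_eq_iff_eq_add, add_assoc, add_comm c' c, this]; abel
    rw [hsplit, map_add, f1, f2]
    change b • u + b' • v = (b - c) • (u + v)
    rw [smul_add, sub_smul b c u, f3, f5, add_smul, f4]
    simp

theorem inj_of_cyc (h : Bal A B R e) (hA : Coh A R) (hB : Coh B R) (cA : Cyc A B R)
    (cB : Cyc B A R) : Inj A R := by
  refine inj_of_extF (h.cohRing hA) (extF_inj (N := R) ?_ h.equiv.toLinearMap h.equiv.injective)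
  intro K _ _ hK i hi f
  obtain ⟨b, hb⟩ := ideal_ext h hA hB cA cB (LinearMap.range i) (Module.Finite.iff_fg.1 inferInstance)
    (f ∘ₗ (LinearEquiv.ofInjective i hi).symm.toLinearMap)
  refine ⟨DistribSMul.toLinearMap A R b, fun k => ?_⟩
  have := hb (LinearEquiv.ofInjective i hi k)
  simpa using this.symm

theorem cyc_of_tl (h : Bal A B R e)
    (H : ∀ (M : Type u) [AddCommGroup M] [Module A M], Module.FinitePresentation A M →
      CyclicModule A M → ∀ m : M, m ≠ 0 → ∃ g : M →ₗ[A] R, g m ≠ 0) : Cyc A B R := by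
  intro I hI x hx
  have := h.fp
  have hfp : Module.FinitePresentation A (R ⧸ I) :=
    Module.finitePresentation_of_surjective I.mkQ I.mkQ_surjective (by rwa [I.ker_mkQ])
  have hcyc : CyclicModule A (R ⧸ I) := by
    refine ⟨I.mkQ e, ?_⟩
    rw [eq_top_iff]
    rintro y -
    obtain ⟨r, rfl⟩ := I.mkQ_surjective y
    obtain ⟨a, rfl⟩ := h.bijA.2 r
    exact Submodule.mem_span_singleton.2 ⟨a, by simp⟩
  obtain ⟨g, hg⟩ := H _ hfp hcyc (I.mkQ x) (by simpa using hx)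
  obtain ⟨b, hb⟩ := h.endo (g ∘ₗ I.mkQ)
  refine ⟨b, fun y hy => ?_, ?_⟩
  · rw [← hb, LinearMap.comp_apply, Submodule.mkQ_apply, (Submodule.Quotient.mk_eq_zero I).2 hy,
      map_zero]
  · rw [← hb]; exact hg

variable {M N : Type u} [AddCommGroup M] [Module A M] [AddCommGroup N] [Module A N]

/-- Precomposition. -/
def pre (B R : Type u) [Ring B] [AddCommGroup R] [Module A R] [Module B R]
    [SMulCommClass A B R] (g : M →ₗ[A] N) : (N →ₗ[A] R) →ₗ[B] (M →ₗ[A] R) where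
  toFun f := f ∘ₗ g
  map_add' _ _ := rfl
  map_smul' _ _ := rfl

theorem free_sep (h : Bal A B R e) (n : ℕ) (v : Fin n → A)
    (hv : ∀ k : (Fin n → A) →ₗ[A] R, k v = 0) : v = 0 := by
  ext i
  apply h.bijA.1
  have := hv (LinearMap.toSpanSingleton A R e ∘ₗ LinearMap.proj i)
  simpa using this

theorem free_refl (h : Bal A B R e) (n : ℕ) (ψ : ((Fin n → A) →ₗ[A] R) →ₗ[B] R) :
    ∃ w, ∀ k, ψ k = k w := by
  have h1 : ∀ i, ∃ a : A, ∀ x : R,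
      ψ ((LinearEquiv.piRing A R (Fin n) B).symm (Pi.single i x)) = a • x := fun i =>
    h.symm.endo (ψ ∘ₗ (LinearEquiv.piRing A R (Fin n) B).symm.toLinearMap ∘ₗ
      LinearMap.single B (fun _ => R) i)
  choose w hw using h1
  refine ⟨w, fun k => ?_⟩
  obtain ⟨y, rfl⟩ := (LinearEquiv.piRing A R (Fin n) B).symm.surjective k
  have hy : y = ∑ i, Pi.single i (y i) := (Finset.univ_sum_single y).symm
  conv_lhs => rw [hy]
  simp [map_sum, hw, LinearEquiv.piRing_symm_apply]

theorem free_dual_fp (h : Bal A B R e) (n : ℕ) :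
    Module.FinitePresentation B ((Fin n → A) →ₗ[A] R) := by
  have := h.symm.fp
  exact Module.FinitePresentation.of_equiv (LinearEquiv.piRing A R (Fin n) B).symm

theorem free_dual_coh (hB : Coh B R) (n : ℕ) : Coh B ((Fin n → A) →ₗ[A] R) :=
  coh_inj (coh_pi hB n) (LinearEquiv.piRing A R (Fin n) B).toLinearMap (LinearEquiv.injective _)

theorem tl_of_inj (h : Bal A B R e) (iB : Inj B R) (M : Type u) [AddCommGroup M] [Module A M]
    (hM : Module.FinitePresentation A M) (x : M) (hx : ∀ g : M →ₗ[A] R, g x = 0) : x = 0 := by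
  obtain ⟨n, m, p, q, hp, hq⟩ := Module.FinitePresentation.exists_fin' A M
  obtain ⟨v, rfl⟩ := hp x
  have := free_dual_fp h m
  have := free_dual_fp h n
  let Φ := pre B R q
  let ev : ((Fin n → A) →ₗ[A] R) →ₗ[B] R :=
    { toFun := fun k => k v, map_add' := fun _ _ => rfl, map_smul' := fun _ _ => rfl }
  obtain ⟨f, hf⟩ := exists_factor Φ ev (fun k hk => by
    have hle : LinearMap.ker p ≤ LinearMap.ker k := by
      intro z hz
      obtain ⟨w, rfl⟩ := (hq z).1 hz
      exact LinearMap.congr_fun hk w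
    have h0 := hx ((LinearMap.ker p).liftQ k hle ∘ₗ
      (p.quotKerEquivOfSurjective hp).symm.toLinearMap)
    have h1 : (p.quotKerEquivOfSurjective hp).symm (p v) = (LinearMap.ker p).mkQ v := by
      rw [LinearEquiv.symm_apply_eq]; rfl
    change k v = 0
    simpa [h1] using h0)
  have hfp : Module.FinitePresentation B (((Fin m → A) →ₗ[A] R) ⧸ LinearMap.range Φ) :=
    Module.finitePresentation_of_surjective (LinearMap.range Φ).mkQ (Submodule.mkQ_surjective _)
      (by rw [Submodule.ker_mkQ]; exact Module.Finite.iff_fg.1 inferInstance)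
  obtain ⟨ψ, hψ⟩ := iB _ (LinearMap.range Φ) hfp f
  obtain ⟨w, hw⟩ := free_refl h m ψ
  have hvw : v - q w = 0 := by
    refine free_sep h n _ fun k => ?_
    have h1 : ψ (Φ k) = ev k := (hψ (Φ.rangeRestrict k)).trans (hf k)
    rw [hw] at h1
    have h2 : k (q w) = k v := h1
    rw [map_sub, h2, sub_self]
  rw [sub_eq_zero.1 hvw]
  exact (hq _).2 ⟨w, rfl⟩

theorem refl_of_inj (h : Bal A B R e) (hB : Coh B R) (iB : Inj B R) (M : Type u)
    [AddCommGroup M] [Module A M]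
    (hM : Module.FinitePresentation A M) (ξ : (M →ₗ[A] R) →ₗ[B] R) : ∃ x, ∀ g, ξ g = g x := by
  obtain ⟨n, m, p, q, hp, hq⟩ := Module.FinitePresentation.exists_fin' A M
  have := free_dual_fp h n
  let Φ := pre B R q
  let P := pre B R p
  have hP : Injective P := fun a b hab => by
    ext x
    obtain ⟨v, rfl⟩ := hp x
    exact LinearMap.congr_fun hab v
  have hr : LinearMap.range P = LinearMap.ker Φ := by
    ext k
    constructor
    · rintro ⟨g, rfl⟩
      refine LinearMap.ext fun w => ?_
      change g (p (q w)) = 0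
      rw [(hq _).2 ⟨w, rfl⟩, map_zero]
    · intro hk
      have hle : LinearMap.ker p ≤ LinearMap.ker k := by
        intro z hz
        obtain ⟨w, rfl⟩ := (hq z).1 hz
        exact LinearMap.congr_fun hk w
      refine ⟨(LinearMap.ker p).liftQ k hle ∘ₗ
        (p.quotKerEquivOfSurjective hp).symm.toLinearMap, LinearMap.ext fun v => ?_⟩
      have h1 : (p.quotKerEquivOfSurjective hp).symm (p v) = (LinearMap.ker p).mkQ v := by
        rw [LinearEquiv.symm_apply_eq]; rfl
      change (LinearMap.ker p).liftQ k hle ((p.quotKerEquivOfSurjective hp).symm (p v)) = k v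
      rw [h1]; rfl
  have h1 : Module.FinitePresentation B (LinearMap.range Φ) :=
    free_dual_coh (A := A) hB m _ inferInstance (LinearMap.range Φ).subtype Subtype.val_injective
  have h2 : Module.FinitePresentation B (((Fin n → A) →ₗ[A] R) ⧸ LinearMap.range P) := by
    rw [hr]
    exact Module.FinitePresentation.of_equiv Φ.quotKerEquivRange.symm
  obtain ⟨ψ, hψ⟩ := iB _ (LinearMap.range P) h2
    (ξ ∘ₗ (LinearEquiv.ofInjective P hP).symm.toLinearMap)
  obtain ⟨v, hv⟩ := free_refl h n ψ
  refine ⟨p v, fun g => ?_⟩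
  have h3 := hψ (LinearEquiv.ofInjective P hP g)
  simp only [LinearMap.comp_apply, LinearEquiv.coe_coe, LinearEquiv.symm_apply_apply] at h3
  rw [← h3]
  exact hv _

theorem dual_finite (h : Bal A B R e) (hB : Coh B R) (M : Type u)
    [AddCommGroup M] [Module A M]
    (hM : Module.FinitePresentation A M) : Module.Finite B (M →ₗ[A] R) := by
  obtain ⟨n, m, p, q, hp, hq⟩ := Module.FinitePresentation.exists_fin' A M
  have := free_dual_fp h n
  let Φ := pre B R q
  have hfin : Module.Finite B (LinearMap.ker Φ) :=
    Module.Finite.iff_fg.2 ((free_dual_coh (A := A) hB m).fg_ker Φ)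
  have hle : ∀ k : LinearMap.ker Φ, LinearMap.ker p ≤ LinearMap.ker k.1 := by
    intro k z hz
    obtain ⟨w, rfl⟩ := (hq z).1 hz
    exact LinearMap.congr_fun k.2 w
  let s : LinearMap.ker Φ → (M →ₗ[A] R) := fun k => (LinearMap.ker p).liftQ k.1 (hle k) ∘ₗ
        (p.quotKerEquivOfSurjective hp).symm.toLinearMap
  have hs : ∀ k v, s k (p v) = k.1 v := by
    intro k v
    have h1 : (p.quotKerEquivOfSurjective hp).symm (p v) = (LinearMap.ker p).mkQ v := by
      rw [LinearEquiv.symm_apply_eq]; rfl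
    change (LinearMap.ker p).liftQ k.1 (hle k) ((p.quotKerEquivOfSurjective hp).symm (p v)) = k.1 v
    rw [h1]; rfl
  let s' : LinearMap.ker Φ →ₗ[B] (M →ₗ[A] R) :=
    { toFun := s
      map_add' := fun a b => by
        ext x
        obtain ⟨v, rfl⟩ := hp x
        rw [LinearMap.add_apply, hs, hs, hs]; rfl
      map_smul' := fun a b => by
        ext x
        obtain ⟨v, rfl⟩ := hp x
        rw [LinearMap.smul_apply, hs, hs]; rfl }
  refine Module.Finite.of_surjective s' fun g => ?_
  refine ⟨⟨g ∘ₗ p, ?_⟩, ?_⟩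
  · refine LinearMap.ext fun w => ?_
    change g (p (q w)) = 0
    rw [(hq _).2 ⟨w, rfl⟩, map_zero]
  · ext x
    obtain ⟨v, rfl⟩ := hp x
    exact hs _ _

theorem embed_of_inj (h : Bal A B R e) (hB : Coh B R) (iB : Inj B R) (M : Type u)
    [AddCommGroup M] [Module A M] (hM : Module.FinitePresentation A M) :
    ∃ (ι : Type u) (f : M →ₗ[A] (ι →₀ R)), Injective f := by
  have := dual_finite h hB M hM
  obtain ⟨n, s, hs⟩ := Module.Finite.exists_fin (R := B) (M := M →ₗ[A] R)
  refine ⟨ULift (Fin n), (Finsupp.linearEquivFunOnFinite A R (ULift.{u} (Fin n))).symm.toLinearMap ∘ₗ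
    LinearMap.pi fun i => s i.down, ?_⟩
  rw [LinearMap.coe_comp]
  refine (LinearEquiv.injective _).comp ?_
  rw [← LinearMap.ker_eq_bot, LinearMap.ker_eq_bot']
  intro x hx
  refine tl_of_inj h iB M hM x fun g => ?_
  have hg : g ∈ Submodule.span B (Set.range s) := by rw [hs]; trivial
  induction hg using Submodule.span_induction with
  | mem g hg => obtain ⟨i, rfl⟩ := hg; exact congrFun hx ⟨i⟩
  | zero => rfl
  | add a b _ _ ha hb => rw [LinearMap.add_apply, ha, hb, add_zero]
  | smul b a _ ha => rw [LinearMap.smul_apply, ha, smul_zero]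

theorem cog_iff : IsFPCogenerator A R ↔ ∀ (M : Type u) [AddCommGroup M] [Module A M],
    Module.FinitePresentation A M → ∀ m : M, m ≠ 0 → ∃ g : M →ₗ[A] R, g m ≠ 0 := by
  constructor
  · intro H M _ _ hM m hm
    obtain ⟨g, hg⟩ := H A M inferInstance hM (LinearMap.toSpanSingleton A M m) (fun h0 => hm (by
      simpa using LinearMap.congr_fun h0 1))
    refine ⟨g, fun h0 => hg ?_⟩
    ext
    simpa using h0
  · intro H M N _ _ _ _ _ hN f hf
    obtain ⟨x, hx⟩ : ∃ x, f x ≠ 0 := by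
      by_contra! hcon
      exact hf (LinearMap.ext hcon)
    obtain ⟨g, hg⟩ := H N hN (f x) hx
    exact ⟨g, fun h0 => hg (LinearMap.congr_fun h0 x)⟩

end BalPart

/-- Theorem 2.9: characterizations of weakly quasi-Frobenius rings among two-sided coherent
rings. -/
theorem stmt_10 (R : Type u) [Ring R] (hl : LeftCoherent R) (hr : RightCoherent R) :
    List.TFAE
      [WQF R,
       FPInjective R R ∧ FPInjective Rᵐᵒᵖ R,
       IsFPCogenerator R R ∧ IsFPCogenerator Rᵐᵒᵖ R,
       FPInjective Rᵐᵒᵖ R ∧ IsFPCogenerator Rᵐᵒᵖ R,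
       (∀ (M : Type u) [AddCommGroup M] [Module R M], Module.FinitePresentation R M →
          Bijective (dualEval R M)) ∧
         (∀ (M : Type u) [AddCommGroup M] [Module Rᵐᵒᵖ M], Module.FinitePresentation Rᵐᵒᵖ M →
          Bijective (dualEvalRight R M)),
       (∀ (M : Type u) [AddCommGroup M] [Module R M], Module.FinitePresentation R M →
          CyclicModule R M → Bijective (dualEval R M)) ∧
         (∀ (M : Type u) [AddCommGroup M] [Module Rᵐᵒᵖ M], Module.FinitePresentation Rᵐᵒᵖ M →
          CyclicModule Rᵐᵒᵖ M → Bijective (dualEvalRight R M)),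
       (∀ (M : Type u) [AddCommGroup M] [Module R M], Module.FinitePresentation R M →
          CyclicModule R M → EmbedsInFree R M) ∧
         (∀ (M : Type u) [AddCommGroup M] [Module Rᵐᵒᵖ M], Module.FinitePresentation Rᵐᵒᵖ M →
          CyclicModule Rᵐᵒᵖ M → EmbedsInFreeRight R M),
       (∀ I : Submodule R R, I.FG → lAnn R (rAnn R (I : Set R)) = (I : Set R)) ∧
         (∀ J : Submodule Rᵐᵒᵖ R, J.FG → rAnn R (lAnn R (J : Set R)) = (J : Set R))] := by
  have b1 : Bal R Rᵐᵒᵖ R (1 : R) :=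
    ⟨by simp only [smul_eq_mul, mul_one]; exact bijective_id, by simpa using (unop_bijective (α := R))⟩
  have b2 : Bal Rᵐᵒᵖ R R (1 : R) := b1.symm
  have cl : Coh R R := coh_of_fg hl
  have cr : Coh Rᵐᵒᵖ R := coh_of_fg hr
  have main : Cyc R Rᵐᵒᵖ R → Cyc Rᵐᵒᵖ R R → FPInjective R R ∧ FPInjective Rᵐᵒᵖ R := fun h1 h2 =>
    ⟨(fpInjective_iff _ _).2 (inj_of_cyc b1 cl cr h1 h2),
      (fpInjective_iff _ _).2 (inj_of_cyc b2 cr cl h2 h1)⟩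
  have cogl : FPInjective Rᵐᵒᵖ R → IsFPCogenerator R R := fun h => cog_iff.2 fun M _ _ hM m hm => by
    by_contra! hcon
    exact hm (tl_of_inj b1 ((fpInjective_iff _ _).1 h) M hM m hcon)
  have cogr : FPInjective R R → IsFPCogenerator Rᵐᵒᵖ R := fun h => cog_iff.2 fun M _ _ hM m hm => by
    by_contra! hcon
    exact hm (tl_of_inj b2 ((fpInjective_iff _ _).1 h) M hM m hcon)
  have cogcl : IsFPCogenerator R R → Cyc R Rᵐᵒᵖ R := fun h =>
    cyc_of_tl b1 fun M _ _ hM _ => cog_iff.1 h M hM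
  have cogcr : IsFPCogenerator Rᵐᵒᵖ R → Cyc Rᵐᵒᵖ R R := fun h =>
    cyc_of_tl b2 fun M _ _ hM _ => cog_iff.1 h M hM
  tfae_have 1 ↔ 2 := ⟨fun h => h.2.2, fun h => ⟨hl, hr, h⟩⟩
  tfae_have 2 → 3 := fun h => ⟨cogl h.2, cogr h.1⟩
  tfae_have 3 → 2 := fun h => main (cogcl h.1) (cogcr h.2)
  tfae_have 2 → 4 := fun h => ⟨h.2, cogr h.1⟩
  tfae_have 4 → 3 := fun h => ⟨cogl h.1, h.2⟩
  tfae_have 2 → 5 := by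
    rintro ⟨i1, i2⟩
    rw [fpInjective_iff] at i1 i2
    refine ⟨fun M _ _ hM => ⟨?_, fun ξ => ?_⟩, fun M _ _ hM => ⟨?_, fun ξ => ?_⟩⟩
    · rw [injective_iff_map_eq_zero]
      exact fun x hx => tl_of_inj b1 i2 M hM x fun g => LinearMap.congr_fun hx g
    · obtain ⟨x, hx⟩ := refl_of_inj b1 cr i2 M hM ξ
      exact ⟨x, LinearMap.ext fun g => (hx g).symm⟩
    · rw [injective_iff_map_eq_zero]
      exact fun x hx => tl_of_inj b2 i1 M hM x fun g => LinearMap.congr_fun hx g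
    · obtain ⟨x, hx⟩ := refl_of_inj b2 cl i1 M hM ξ
      exact ⟨x, LinearMap.ext fun g => (hx g).symm⟩
  tfae_have 5 → 6 := fun h => ⟨fun M _ _ hM _ => h.1 M hM, fun M _ _ hM _ => h.2 M hM⟩
  tfae_have 6 → 2 := by
    rintro ⟨h1, h2⟩
    refine main (cyc_of_tl b1 fun M _ _ hM hc m hm => ?_)
      (cyc_of_tl b2 fun M _ _ hM hc m hm => ?_)
    · by_contra! hcon
      exact hm ((injective_iff_map_eq_zero (dualEval R M)).1 (h1 M hM hc).1 m
        (LinearMap.ext hcon))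
    · by_contra! hcon
      exact hm ((injective_iff_map_eq_zero (dualEvalRight R M)).1 (h2 M hM hc).1 m
        (LinearMap.ext hcon))
  tfae_have 2 → 7 := by
    rintro ⟨i1, i2⟩
    rw [fpInjective_iff] at i1 i2
    exact ⟨fun M _ _ hM _ => embed_of_inj b1 cr i2 M hM,
      fun M _ _ hM _ => embed_of_inj b2 cl i1 M hM⟩
  tfae_have 7 → 2 := by
    rintro ⟨h1, h2⟩
    refine main (cyc_of_tl b1 fun M _ _ hM hc m hm => ?_)
      (cyc_of_tl b2 fun M _ _ hM hc m hm => ?_)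
    · obtain ⟨ι, f, hf⟩ := h1 M hM hc
      by_contra! hcon
      refine hm (hf ?_)
      rw [map_zero]
      ext i
      exact hcon (Finsupp.lapply i ∘ₗ f)
    · obtain ⟨ι, f, hf⟩ := h2 M hM hc
      by_contra! hcon
      refine hm (hf ?_)
      rw [map_zero]
      ext i
      exact hcon (Finsupp.lapply i ∘ₗ f)
  tfae_have 8 → 2 := by
    rintro ⟨h1, h2⟩
    refine main (fun I hI x hx => ?_) (fun I hI x hx => ?_)
    · by_contra! hcon
      have hx' : x ∈ lAnn R (rAnn R (I : Set R)) := fun t ht => hcon (op t) ht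
      rw [h1 I hI] at hx'
      exact hx hx'
    · by_contra! hcon
      have hx' : x ∈ rAnn R (lAnn R (I : Set R)) := fun t ht => hcon t ht
      rw [h2 I hI] at hx'
      exact hx hx'
  tfae_have 3 → 8 := by
    rintro ⟨h1, h2⟩
    refine ⟨fun I hI => Set.Subset.antisymm (fun x hx => ?_) fun x hx t ht => ht x hx,
      fun I hI => Set.Subset.antisymm (fun x hx => ?_) fun x hx t ht => ht x hx⟩
    · by_contra hcon
      obtain ⟨b, hb, hb'⟩ := cogcl h1 I hI x hcon
      exact hb' (hx b.unop hb)
    · by_contra hcon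
      obtain ⟨b, hb, hb'⟩ := cogcr h2 I hI x hcon
      exact hb' (hx b hb)
  tfae_finish
end

section
/- Let R be a left noetherian ring and a left CF-ring. Then the following are equivalent: (1) R is left artinian; (2) R is left or right semiartinian; (3) R is semiregular; (4) R is semiperfect; (5) the socle soc(_RR) is an essential submodule of the left module _RR. -/
/-!
Common definitions: rings are associative with identity, not necessarily commutative.
Left `R`-modules are `Module R M`; right `R`-modules are `Module Rᵐᵒᵖ M`.
-/

universe u

open MulOpposite Function Pointwise

theorem aux_simple_of_socle {T : Type u} [Ring T] {M : Type u} [AddCommGroup M] [Module T M]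
    (h : socle T M ≠ ⊥) : ∃ N : Submodule T M, IsSimpleModule T N := by
  by_contra hc
  push Not at hc
  apply h
  unfold socle
  have : {N : Submodule T M | IsSimpleModule T N} = ∅ := by
    ext N; simpa using hc N
  rw [this, sSup_empty]

theorem aux_socle_of_simple {T : Type u} [Ring T] {M : Type u} [AddCommGroup M] [Module T M]
    (N : Submodule T M) (hN : IsSimpleModule T N) : socle T M ≠ ⊥ := by
  intro h
  have h1 : N ≤ socle T M := le_sSup hN
  rw [h, le_bot_iff] at h1
  exact (isSimpleModule_iff_isAtom.mp hN).1 h1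

/-- A nonzero submodule of a module over a semiartinian ring contains a simple submodule. -/
theorem aux_semiart_sub {T : Type u} [Ring T] (hT : LeftSemiartinian T)
    {M : Type u} [AddCommGroup M] [Module T M] (P : Submodule T M) (hP : P ≠ ⊥) :
    ∃ N : Submodule T M, N ≤ P ∧ IsSimpleModule T N := by
  obtain ⟨x, hx, hx0⟩ := Submodule.exists_mem_ne_zero_of_ne_bot hP
  have hcyc : CyclicModule T (Submodule.span T {x}) := by
    refine ⟨⟨x, Submodule.mem_span_singleton_self x⟩, ?_⟩
    rw [eq_top_iff]
    rintro ⟨y, hy⟩ -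
    obtain ⟨a, rfl⟩ := Submodule.mem_span_singleton.mp hy
    exact Submodule.mem_span_singleton.mpr ⟨a, rfl⟩
  have hnt : Nontrivial (Submodule.span T {x}) :=
    ⟨⟨x, Submodule.mem_span_singleton_self x⟩, 0, by simpa using hx0⟩
  obtain ⟨N, hN⟩ := aux_simple_of_socle (hT _ hcyc hnt)
  refine ⟨N.map (Submodule.span T {x}).subtype, ?_, ?_⟩
  · refine (Submodule.map_subtype_le _ _).trans ?_
    simpa using hx
  · exact IsSimpleModule.congr
      (Submodule.equivMapOfInjective _ (Submodule.subtype_injective _) N).symm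

theorem aux_art_semiart {T : Type u} [Ring T] [IsArtinianRing T] : LeftSemiartinian T := by
  intro M _ _ ⟨m, hm⟩ hnt
  have : Module.Finite T M := ⟨⟨{m}, by simpa using hm⟩⟩
  have : IsArtinian T M := inferInstance
  obtain ⟨N, hN, -⟩ := (eq_bot_or_exists_atom_le (⊤ : Submodule T M)).resolve_left top_ne_bot
  exact aux_socle_of_simple N (isSimpleModule_iff_isAtom.mpr hN)

theorem aux_semiart_ess {T : Type u} [Ring T] (hT : LeftSemiartinian T) :
    EssentialSub T (socle T T) := by
  intro P hP h
  obtain ⟨N, hNP, hN⟩ := aux_semiart_sub hT P hP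
  have h1 : N ≤ socle T T ⊓ P := le_inf (le_sSup hN) hNP
  rw [h, le_bot_iff] at h1
  exact (isSimpleModule_iff_isAtom.mp hN).1 h1

/-- left semiartinian and left noetherian imply left artinian. -/
theorem aux_semiart_art {T : Type u} [Ring T] [IsNoetherianRing T] (hT : LeftSemiartinian T) :
    IsArtinianRing T := by
  obtain ⟨N, hN, hmax⟩ := set_has_maximal_iff_noetherian.mpr (inferInstance : IsNoetherian T T)
    {N : Submodule T T | IsArtinian T N} ⟨⊥, by
      change IsArtinian T (⊥ : Submodule T T); infer_instance⟩
  change IsArtinian T N at hN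
  by_cases hNt : N = ⊤
  · subst hNt
    exact isArtinian_of_linearEquiv Submodule.topEquiv
  · exfalso
    have hnt : (⊤ : Submodule T (T ⧸ N)) ≠ ⊥ := by
      have : Nontrivial (T ⧸ N) := Submodule.Quotient.nontrivial_iff.mpr hNt
      exact top_ne_bot
    obtain ⟨S, -, hS⟩ := aux_semiart_sub hT _ hnt
    let K : Submodule T T := S.comap N.mkQ
    have hNK : N ≤ K := by
      intro x hx
      change N.mkQ x ∈ S
      have : N.mkQ x = 0 := by simpa using hx
      rw [this]; exact S.zero_mem
    have hK : IsArtinian T K := by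
      let g : K →ₗ[T] S := (N.mkQ.restrict (p := K) (q := S) (fun x hx => hx))
      refine isArtinian_of_range_eq_ker (Submodule.inclusion hNK) g ?_
      ext ⟨x, hx⟩
      simp only [LinearMap.mem_range, LinearMap.mem_ker]
      constructor
      · rintro ⟨⟨y, hy⟩, hyx⟩
        have : y = x := congrArg Subtype.val hyx
        subst this
        apply Subtype.ext
        change N.mkQ y = 0
        simpa using hy
      · intro h
        have h' : N.mkQ x = 0 := congrArg Subtype.val h
        exact ⟨⟨x, by simpa using h'⟩, rfl⟩
    apply hmax K hK
    refine lt_of_le_of_ne hNK ?_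
    intro h
    apply (isSimpleModule_iff_isAtom.mp hS).1
    rw [eq_bot_iff]
    intro s hs
    obtain ⟨x, rfl⟩ := N.mkQ_surjective s
    have : x ∈ K := hs
    rw [← h] at this
    simpa using this

theorem aux_pull {R : Type u} [Ring R] {M F : Type u} [AddCommGroup M] [Module R M]
    [AddCommGroup F] [Module R F] (x : M) (q : M →ₗ[R] F)
    (hq : ∀ a : R, q (a • x) = 0 → a • x = 0) (S : Submodule R F) (hS : IsSimpleModule R S)
    (hSP : S ≤ Submodule.span R {q x}) :
    ∃ N : Submodule R M, N ≤ Submodule.span R {x} ∧ IsSimpleModule R N := by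
  let p : Submodule.span R {x} →ₗ[R] F := q.comp (Submodule.subtype _)
  have hpinj : Injective p := by
    refine (injective_iff_map_eq_zero p).mpr ?_
    rintro ⟨y, hy⟩ hy0
    obtain ⟨a, rfl⟩ := Submodule.mem_span_singleton.mp hy
    exact Subtype.ext (hq a hy0)
  have hmap : (S.comap p).map p = S := by
    apply Submodule.map_comap_eq_self
    refine hSP.trans ?_
    rw [Submodule.span_singleton_le_iff_mem]
    exact ⟨⟨x, Submodule.mem_span_singleton_self x⟩, rfl⟩
  refine ⟨(S.comap p).map (Submodule.subtype _), Submodule.map_subtype_le _ _, ?_⟩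
  have e1 : S.comap p ≃ₗ[R] S :=
    (Submodule.equivMapOfInjective p hpinj (S.comap p)).trans (LinearEquiv.ofEq _ _ hmap)
  exact IsSimpleModule.congr ((Submodule.equivMapOfInjective _
    (Submodule.subtype_injective _) (S.comap p)).symm.trans e1)

theorem aux_free_simple {R : Type u} [Ring R] (h5 : EssentialSub R (socle R R))
    [IsNoetherianRing R] {ι : Type u} :
    ∀ (n : ℕ) (x : ι →₀ R), x ≠ 0 → x.support.card = n →
      ∃ N : Submodule R (ι →₀ R), N ≤ Submodule.span R {x} ∧ IsSimpleModule R N := by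
  intro n
  induction n using Nat.strong_induction_on with
  | _ n ih =>
  intro x hx hn
  obtain ⟨i, hi⟩ : ∃ i, x i ≠ 0 := by
    by_contra hc
    push Not at hc
    exact hx (Finsupp.ext hc)
  by_cases hk : ∃ a : R, a • x ≠ 0 ∧ a * x i = 0
  · obtain ⟨a, ha, hai⟩ := hk
    obtain ⟨N, hN, hN'⟩ := ih (a • x).support.card (by
      rw [← hn]
      apply Finset.card_lt_card
      rw [Finset.ssubset_iff_of_subset Finsupp.support_smul]
      exact ⟨i, by simpa using hi, by simpa using hai⟩) (a • x) ha rfl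
    refine ⟨N, hN.trans ?_, hN'⟩
    rw [Submodule.span_singleton_le_iff_mem]
    exact Submodule.smul_mem _ _ (Submodule.mem_span_singleton_self x)
  · push Not at hk
    -- a simple left ideal inside `R x i`
    have hP : Submodule.span R {x i} ≠ ⊥ := by simpa using hi
    obtain ⟨S, hS, hSP⟩ : ∃ S : Submodule R R, IsSimpleModule R S ∧
        S ≤ Submodule.span R {x i} := by
      have h := h5 _ hP
      have hss : IsSemisimpleModule R (socle R R) := by
        unfold socle
        rw [sSup_eq_iSup]
        refine isSemisimpleModule_biSup_of_isSemisimpleModule_submodule ?_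
        intro N hN
        have : IsSimpleModule R N := hN
        infer_instance
      have hss2 : IsSemisimpleModule R (socle R R ⊓ Submodule.span R {x i} : Submodule R R) :=
        IsSemisimpleModule.of_injective (Submodule.inclusion inf_le_left)
          (Submodule.inclusion_injective _)
      have hnt : Nontrivial (socle R R ⊓ Submodule.span R {x i} : Submodule R R) :=
        Submodule.nontrivial_iff_ne_bot.mpr h
      obtain ⟨m, hm⟩ := IsSemisimpleModule.exists_simple_submodule R
        (socle R R ⊓ Submodule.span R {x i} : Submodule R R)
      refine ⟨m.map (Submodule.subtype _), ?_, (Submodule.map_subtype_le _ _).trans inf_le_right⟩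
      exact IsSimpleModule.congr
        (Submodule.equivMapOfInjective _ (Submodule.subtype_injective _) m).symm
    -- transport
    exact aux_pull x (Finsupp.lapply i) (fun a h => by
      by_contra hne
      exact hk a hne h) S hS hSP

theorem aux_ess_semiart {R : Type u} [Ring R] [IsNoetherianRing R] (h2 : LeftCF R)
    (h5 : EssentialSub R (socle R R)) : LeftSemiartinian R := by
  intro M _ _ hc hnt
  obtain ⟨ι, f, hf⟩ := h2 M hc
  obtain ⟨m, hm⟩ := exists_ne (0 : M)
  have hfm : f m ≠ 0 := fun h => hm (hf (by simpa using h))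
  obtain ⟨N, hN, hN'⟩ := aux_free_simple h5 _ (f m) hfm rfl
  obtain ⟨K, -, hK⟩ := aux_pull m f (fun a h => hf (by rw [h, map_zero])) N hN' hN
  exact aux_socle_of_simple K hK

/-- In a left CF-ring every left ideal is a left annihilator. -/
theorem aux_ann {R : Type u} [Ring R] (h2 : LeftCF R) (I : Ideal R) (y : R) (hy : y ∉ I) :
    ∃ x : R, (∀ a ∈ I, a * x = 0) ∧ y * x ≠ 0 := by
  obtain ⟨ι, f, hf⟩ := h2 (R ⧸ I) ⟨Submodule.mkQ I 1, by
    rw [eq_top_iff]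
    intro z _
    obtain ⟨r, rfl⟩ := Submodule.mkQ_surjective I z
    refine Submodule.mem_span_singleton.mpr ⟨r, ?_⟩
    rw [← map_smul]; simp⟩
  have key : ∀ r : R, f (Submodule.mkQ I r) = r • f (Submodule.mkQ I 1) := by
    intro r
    rw [← map_smul, ← map_smul]; simp
  have hy' : f (Submodule.mkQ I y) ≠ 0 := by
    intro h
    have : Submodule.mkQ I y = 0 := hf (by simpa using h)
    exact hy (by simpa using this)
  obtain ⟨i, hi⟩ : ∃ i, f (Submodule.mkQ I y) i ≠ 0 := by
    by_contra hc
    push Not at hc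
    exact hy' (Finsupp.ext hc)
  refine ⟨f (Submodule.mkQ I 1) i, ?_, ?_⟩
  · intro a ha
    have h0 : Submodule.mkQ I a = 0 := by simpa using ha
    have := congrArg (fun g => g i) (key a)
    simp only [h0, map_zero] at this
    simpa using this.symm
  · rw [key] at hi
    simpa using hi

theorem aux_nilp {R : Type u} [Ring R] [IsNoetherianRing R] (h2 : LeftCF R) :
    IsNilpotent (Ring.jacobson R) := by
  let J := Ring.jacobson R
  have hts : ∀ n, (J ^ n).IsTwoSided := fun n => inferInstance
  let r : ℕ →o Submodule R R :=
    { toFun := fun n =>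
        { carrier := {x | ∀ a ∈ J ^ n, a * x = 0}
          zero_mem' := by simp
          add_mem' := by
            intro x y hx hy a ha
            rw [mul_add, hx a ha, hy a ha, add_zero]
          smul_mem' := by
            intro c x hx a ha
            rw [smul_eq_mul, ← mul_assoc]
            exact hx _ ((hts n).mul_mem_of_left c ha) }
      monotone' := by
        intro m n hmn x hx a ha
        exact hx a (Ideal.pow_le_pow_right hmn ha) }
  obtain ⟨n, hn⟩ := monotone_stabilizes_iff_noetherian.mpr (inferInstance : IsNoetherian R R) r
  refine ⟨n, ?_⟩
  have hle : J ^ n ≤ J ^ (n + 1) := by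
    intro y hy
    by_contra hc
    obtain ⟨x, hx, hyx⟩ := aux_ann h2 _ y hc
    have hx' : x ∈ r (n + 1) := hx
    rw [← hn (n + 1) (Nat.le_succ n)] at hx'
    exact hyx (hx' y hy)
  have := Submodule.FG.eq_bot_of_le_jacobson_smul (N := J ^ n)
    (IsNoetherian.noetherian _) (by
      rw [smul_eq_mul]
      change J ^ n ≤ J * J ^ n
      rwa [← Ideal.IsTwoSided.pow_succ])
  exact this

theorem aux_ss_art {R : Type u} [Ring R] [IsNoetherianRing R] (h2 : LeftCF R)
    (hs : IsSemisimpleRing (R ⧸ Ring.jacobson R)) : IsArtinianRing R := by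
  have : IsSemiprimaryRing R := ⟨hs, aux_nilp h2⟩
  exact IsSemiprimaryRing.isNoetherian_iff_isArtinian.mp ‹_›

/-- noetherian von Neumann regular rings are semisimple. -/
theorem aux_vnr_ss {S : Type u} [Ring S] [IsNoetherianRing S]
    (h : ∀ a : S, ∃ x, a * x * a = a) : IsSemisimpleRing S := by
  refine { exists_isCompl := ?_ }
  intro I
  obtain ⟨E, ⟨e, heI, he, rfl⟩, hmax⟩ :=
    set_has_maximal_iff_noetherian.mpr (inferInstance : IsNoetherian S S)
    {E : Submodule S S | ∃ e ∈ I, e * e = e ∧ E = Submodule.span S {e}}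
    ⟨Submodule.span S {0}, 0, I.zero_mem, by simp, rfl⟩
  have hI : I = Submodule.span S {e} := by
    refine le_antisymm ?_ (by simpa using heI)
    intro a ha
    by_contra hae
    set b := a - a * e with hb
    have hbI : b ∈ I := I.sub_mem ha (I.smul_mem a heI)
    have hbe : b * e = 0 := by rw [hb, sub_mul, mul_assoc, he, sub_self]
    obtain ⟨x, hx⟩ := h b
    set g := x * b with hg
    have hgI : g ∈ I := I.smul_mem x hbI
    have hgg : g * g = g := by rw [hg, mul_assoc, ← mul_assoc b, hx]
    have hge : g * e = 0 := by rw [hg, mul_assoc, hbe, mul_zero]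
    have hbg : b * g = b := by rw [hg, ← mul_assoc, hx]
    clear_value g
    set k := g - e * g with hk
    have hek : e * k = 0 := by rw [hk, mul_sub, ← mul_assoc, he, sub_self]
    have hke : k * e = 0 := by rw [hk, sub_mul, mul_assoc, hge, mul_zero, sub_zero]
    have hgk : g * k = g := by rw [hk, mul_sub, hgg, ← mul_assoc, hge, zero_mul, sub_zero]
    have hkk : k * k = k := by
      nth_rewrite 1 [hk]
      rw [sub_mul, mul_assoc, hgk]
    have hbk : b * k = b := by rw [hk, mul_sub, hbg, ← mul_assoc, hbe, zero_mul, sub_zero]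
    have hkI : k ∈ I := I.sub_mem hgI (I.smul_mem e hgI)
    refine hmax (Submodule.span S {e + k}) ⟨e + k, I.add_mem heI hkI, ?_, rfl⟩ ?_
    · rw [mul_add, add_mul, add_mul, he, hke, hek, hkk, add_zero, zero_add]
    · refine lt_of_le_of_ne ?_ ?_
      · rw [Submodule.span_singleton_le_iff_mem, Submodule.mem_span_singleton]
        exact ⟨e, by rw [smul_eq_mul, mul_add, he, hek, add_zero]⟩
      · intro heq
        apply hae
        have hbm : b ∈ Submodule.span S {e} := by
          rw [heq, Submodule.mem_span_singleton]
          exact ⟨b, by rw [smul_eq_mul, mul_add, hbe, hbk, zero_add]⟩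
        have : a = b + a * e := by rw [hb]; abel
        rw [this]
        exact Submodule.add_mem _ hbm (Submodule.mem_span_singleton.mpr ⟨a, rfl⟩)
  refine ⟨Submodule.span S {1 - e}, ?_⟩
  rw [hI]
  constructor
  · rw [Submodule.disjoint_def]
    intro y hy hy'
    obtain ⟨c, rfl⟩ := Submodule.mem_span_singleton.mp hy
    obtain ⟨d, hd⟩ := Submodule.mem_span_singleton.mp hy'
    simp only [smul_eq_mul] at hd ⊢
    have h1 : c * e * e = d * (1 - e) * e := by rw [hd]
    rw [mul_assoc, he, mul_assoc, sub_mul, he, one_mul, sub_self, mul_zero] at h1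
    exact h1
  · rw [codisjoint_iff, eq_top_iff]
    intro y _
    have : y = y • e + y • (1 - e) := by simp only [smul_eq_mul, mul_sub, mul_one]; abel
    rw [this]
    exact Submodule.add_mem_sup (Submodule.smul_mem _ _ (Submodule.mem_span_singleton_self _))
      (Submodule.smul_mem _ _ (Submodule.mem_span_singleton_self _))

/-- A left semiartinian semiprime ring with ACC on right ideals is semisimple. -/
theorem aux_right {T : Type u} [Ring T] [IsNoetherianRing Tᵐᵒᵖ] (hT : LeftSemiartinian T)
    (hsp : ∀ x : T, (∀ y, x * y * x = 0) → x = 0) : IsSemisimpleRing T := by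
  obtain ⟨E, ⟨e, hes, he, rfl⟩, hmax⟩ :=
    set_has_maximal_iff_noetherian.mpr (inferInstance : IsNoetherian Tᵐᵒᵖ Tᵐᵒᵖ)
    {E : Submodule Tᵐᵒᵖ Tᵐᵒᵖ | ∃ e ∈ socle T T, e * e = e ∧ E = Submodule.span Tᵐᵒᵖ {op e}}
    ⟨Submodule.span Tᵐᵒᵖ {op 0}, 0, Submodule.zero_mem _, by simp, rfl⟩
  by_cases h1 : e = 1
  · have htop : socle T T = ⊤ := by
      rw [eq_top_iff]
      intro y _
      have := (socle T T).smul_mem y hes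
      rwa [h1, smul_eq_mul, mul_one] at this
    exact IsSemisimpleModule.of_sSup_simples_eq_top htop
  exfalso
  set f := 1 - e with hf
  have hf0 : f ≠ 0 := fun h => h1 (sub_eq_zero.mp h).symm
  have hfe : f * e = 0 := by rw [hf, sub_mul, he, one_mul, sub_self]
  have hef : e * f = 0 := by rw [hf, mul_sub, he, mul_one, sub_self]
  have hff : f * f = f := by nth_rewrite 1 [hf]; rw [sub_mul, hef, one_mul, sub_zero]
  obtain ⟨N, hNf, hN⟩ := aux_semiart_sub hT (Submodule.span T {f}) (by simpa using hf0)
  have hNf' : ∀ x ∈ N, x * f = x := by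
    intro x hx
    obtain ⟨c, rfl⟩ := Submodule.mem_span_singleton.mp (hNf hx)
    rw [smul_eq_mul, mul_assoc, hff]
  obtain ⟨a, haN, b, hbN, hab⟩ : ∃ a ∈ N, ∃ b ∈ N, a * b ≠ 0 := by
    by_contra hc
    push Not at hc
    apply (isSimpleModule_iff_isAtom.mp hN).1
    rw [eq_bot_iff]
    intro x hx
    rw [Submodule.mem_bot]
    apply hsp
    intro y
    rw [mul_assoc]
    exact hc x hx _ (N.smul_mem y hx)
  let φ : N →ₗ[T] N :=
    { toFun := fun x => ⟨x.1 * b, N.smul_mem x.1 hbN⟩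
      map_add' := fun x y => Subtype.ext (add_mul _ _ _)
      map_smul' := fun c x => Subtype.ext (mul_assoc _ _ _) }
  have hφ : Bijective φ := by
    refine (LinearMap.bijective_or_eq_zero φ).resolve_right ?_
    intro h
    apply hab
    have := LinearMap.congr_fun h ⟨a, haN⟩
    exact congrArg Subtype.val this
  obtain ⟨⟨g, hgN⟩, hg⟩ := hφ.2 ⟨b, hbN⟩
  have hgb : g * b = b := congrArg Subtype.val hg
  have hgg : g * g = g := by
    have : φ ⟨g * g, N.smul_mem g hgN⟩ = φ ⟨g, hgN⟩ := by
      apply Subtype.ext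
      change g * g * b = g * b
      rw [mul_assoc, hgb, hgb]
    exact congrArg Subtype.val (hφ.1 this)
  have hg0 : g ≠ 0 := by
    rintro rfl
    rw [zero_mul] at hgb
    exact hab (by rw [← hgb, mul_zero])
  have hgf : g * f = g := hNf' g hgN
  set k := f * g with hk
  have hgk : g * k = g := by rw [hk, ← mul_assoc, hgf, hgg]
  have hkk : k * k = k := by
    nth_rewrite 1 [hk]
    rw [mul_assoc, hgk]
  have hk0 : k ≠ 0 := fun h => hg0 (by rw [← hgk, h, mul_zero])
  have hek : e * k = 0 := by rw [hk, ← mul_assoc, hef, zero_mul]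
  have hke : k * e = 0 := by rw [hk, ← hgf, mul_assoc, mul_assoc, hfe, mul_zero, mul_zero]
  have hNs : N ≤ socle T T := le_sSup hN
  refine hmax (Submodule.span Tᵐᵒᵖ {op (e + k)})
    ⟨e + k, Submodule.add_mem _ hes (hNs (N.smul_mem f hgN)), ?_, rfl⟩ ?_
  · rw [mul_add, add_mul, add_mul, he, hke, hek, hkk, add_zero, zero_add]
  · refine lt_of_le_of_ne ?_ ?_
    · rw [Submodule.span_singleton_le_iff_mem, Submodule.mem_span_singleton]
      exact ⟨op e, by rw [smul_eq_mul, ← op_mul, add_mul, he, hke, add_zero]⟩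
    · intro heq
      have hm : op k ∈ Submodule.span Tᵐᵒᵖ {op e} := by
        rw [heq, Submodule.mem_span_singleton]
        exact ⟨op k, by rw [smul_eq_mul, ← op_mul, add_mul, hek, hkk, zero_add]⟩
      obtain ⟨c, hc⟩ := Submodule.mem_span_singleton.mp hm
      have hc' : e * unop c = k := congrArg unop hc
      apply hk0
      rw [← hek, ← hc', ← mul_assoc, he]

/-- Semiartinian passes to quotient rings. -/
theorem aux_semiart_quot {A B : Type u} [Ring A] [Ring B] (φ : A →+* B) (hφ : Surjective φ)
    (hA : LeftSemiartinian A) : LeftSemiartinian B := by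
  intro M _ _ ⟨m, hm⟩ hnt
  let _ : Module A M := Module.compHom M φ
  have hsm : ∀ (a : A) (x : M), a • x = φ a • x := fun _ _ => rfl
  have hne := hA M ⟨m, by
    rw [eq_top_iff]
    intro z _
    have hz : z ∈ Submodule.span B {m} := by rw [hm]; trivial
    obtain ⟨c, rfl⟩ := Submodule.mem_span_singleton.mp hz
    obtain ⟨a, rfl⟩ := hφ c
    exact Submodule.mem_span_singleton.mpr ⟨a, rfl⟩⟩ hnt
  obtain ⟨N, hN⟩ := aux_simple_of_socle hne
  have hat := isSimpleModule_iff_isAtom.mp hN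
  let toB : Submodule A M → Submodule B M := fun P =>
    { carrier := P
      zero_mem' := P.zero_mem
      add_mem' := fun h h' => P.add_mem h h'
      smul_mem' := by
        intro c x hx
        obtain ⟨a, rfl⟩ := hφ c
        exact P.smul_mem a hx }
  let toA : Submodule B M → Submodule A M := fun P =>
    { carrier := P
      zero_mem' := P.zero_mem
      add_mem' := fun h h' => P.add_mem h h'
      smul_mem' := fun a x hx => P.smul_mem (φ a) hx }
  refine aux_socle_of_simple (toB N) (isSimpleModule_iff_isAtom.mpr ⟨?_, ?_⟩)
  · intro h
    apply hat.1
    rw [eq_bot_iff]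
    intro x hx
    have : x ∈ toB N := hx
    rw [h] at this
    simpa using this
  · intro P hP
    have h0 : toA P = ⊥ := by
      apply hat.2
      refine lt_of_le_of_ne hP.le ?_
      intro h
      apply hP.ne
      apply SetLike.coe_injective
      exact congrArg (fun Q : Submodule A M => (Q : Set M)) h
    rw [eq_bot_iff]
    intro x hx
    have : x ∈ toA P := hx
    rw [h0] at this
    simpa using this

/-- Semiprimitive rings are semiprime. -/
theorem aux_semiprime {S : Type u} [Ring S] (hJ : Ring.jacobson S = ⊥) (x : S)
    (hx : ∀ y, x * y * x = 0) : x = 0 := by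
  have : x ∈ Ring.jacobson S := by
    rw [← Ideal.jacobson_bot, Ideal.mem_jacobson_iff]
    intro y
    refine ⟨1 - y * x, ?_⟩
    have h := hx y
    have h' : y * x * (y * x) = 0 := by
      rw [mul_assoc, ← mul_assoc x, h, mul_zero]
    have : (1 - y * x) * y * x + (1 - y * x) - 1 = - (y * x * (y * x)) := by noncomm_ring
    rw [this, h', neg_zero]
    exact Submodule.zero_mem _
  rw [hJ] at this
  simpa using this

theorem aux_right_art {R : Type u} [Ring R] [IsNoetherianRing R] (h2 : LeftCF R)
    (h : LeftSemiartinian Rᵐᵒᵖ) : IsArtinianRing R := by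
  apply aux_ss_art h2
  rw [← isSemisimpleRing_mulOpposite_iff]
  have hq : IsNoetherianRing (R ⧸ Ring.jacobson R) :=
    isNoetherianRing_of_surjective _ _ (Ideal.Quotient.mk (Ring.jacobson R))
      Ideal.Quotient.mk_surjective
  have : IsNoetherianRing (R ⧸ Ring.jacobson R)ᵐᵒᵖᵐᵒᵖ :=
    isNoetherianRing_of_ringEquiv _ (RingEquiv.opOp (R ⧸ Ring.jacobson R))
  apply aux_right
  · refine aux_semiart_quot (RingHom.op (Ideal.Quotient.mk (Ring.jacobson R))) ?_ h
    intro y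
    obtain ⟨r, hr⟩ := Ideal.Quotient.mk_surjective (unop y)
    exact ⟨op r, congrArg op hr⟩
  · intro x hx
    apply unop_injective
    apply aux_semiprime (Ring.jacobson_quotient_jacobson R)
    intro y
    have := congrArg unop (hx (op y))
    simpa [mul_assoc] using this

theorem aux_semireg_ss {R : Type u} [Ring R] [IsNoetherianRing R] (h : Semiregular R) :
    IsSemisimpleRing (R ⧸ Ring.jacobson R) := by
  have hq : IsNoetherianRing (R ⧸ Ring.jacobson R) :=
    isNoetherianRing_of_surjective _ _ (Ideal.Quotient.mk (Ring.jacobson R))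
      Ideal.Quotient.mk_surjective
  apply aux_vnr_ss
  intro a
  obtain ⟨r, rfl⟩ := Ideal.Quotient.mk_surjective a
  obtain ⟨x, hx⟩ := h r
  rw [Ideal.jacobson_bot] at hx
  refine ⟨Ideal.Quotient.mk _ x, ?_⟩
  rw [← map_mul, ← map_mul]
  exact (Ideal.Quotient.eq.mpr hx).symm

theorem aux_ss_semireg {R : Type u} [Ring R]
    (h : IsSemisimpleModule R (R ⧸ Ideal.jacobson (⊥ : Ideal R))) : Semiregular R := by
  intro a
  rw [Ideal.jacobson_bot] at h ⊢
  let J := Ring.jacobson R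
  let p : R →ₗ[R] R ⧸ J := Submodule.mkQ J
  -- complement of the image of `R a`
  obtain ⟨C, hC⟩ := exists_isCompl (Submodule.span R {p a})
  have h1 : p 1 ∈ Submodule.span R {p a} ⊔ C := by rw [hC.sup_eq_top]; trivial
  obtain ⟨u, hu, v, hv, huv⟩ := Submodule.mem_sup.mp h1
  obtain ⟨x, rfl⟩ := Submodule.mem_span_singleton.mp hu
  refine ⟨x, ?_⟩
  have h2 : a • v = p (a - a * x * a) := by
    have : v = p 1 - x • p a := by rw [← huv]; abel
    rw [this, ← map_smul, ← map_sub, ← map_smul]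
    congr 1
    simp only [smul_eq_mul, mul_sub, mul_one, mul_assoc]
  have h3 : p (a - a * x * a) ∈ C := h2 ▸ C.smul_mem a hv
  have h4 : p (a - a * x * a) ∈ Submodule.span R {p a} := by
    refine Submodule.mem_span_singleton.mpr ⟨1 - a * x, ?_⟩
    rw [← map_smul, smul_eq_mul, sub_mul, one_mul]
  have h5 := Submodule.disjoint_def.mp hC.disjoint _ h4 h3
  exact (Submodule.Quotient.mk_eq_zero _).mp h5

theorem aux_art_semiperf {R : Type u} [Ring R] [IsArtinianRing R] : Semiperfect R := by
  unfold Semiperfect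
  rw [Ideal.jacobson_bot]
  have hs : IsSemisimpleRing (R ⧸ Ring.jacobson R) := inferInstance
  refine ⟨?_, ?_⟩
  · let e : R ⧸ Ring.jacobson R →ₛₗ[Ideal.Quotient.mk (Ring.jacobson R)] R ⧸ Ring.jacobson R :=
      ⟨.id _, fun _ _ ↦ rfl⟩
    exact (e.isSemisimpleModule_iff_of_bijective Function.bijective_id).2 hs
  · intro a ha
    obtain ⟨n, hn⟩ := IsSemiprimaryRing.isNilpotent (R := R)
    obtain ⟨e, he, hea⟩ := exists_isIdempotentElem_eq_of_ker_isNilpotent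
      (Ideal.Quotient.mk (Ring.jacobson R)) (by
        intro x hx
        rw [Ideal.mk_ker] at hx
        refine ⟨n, ?_⟩
        have := Ideal.pow_mem_pow hx n
        rw [hn] at this
        simpa using this) (Ideal.Quotient.mk _ a) ⟨a, rfl⟩ (by
        change _ * _ = _
        rw [← map_mul]
        exact Ideal.Quotient.eq.mpr ha)
    exact ⟨e, he, Ideal.Quotient.eq.mp hea⟩

/-- Proposition 2.13: for a left noetherian left CF-ring the following are equivalent. -/
theorem stmt_14 (R : Type u) [Ring R] (h1 : IsNoetherianRing R) (h2 : LeftCF R) :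
    List.TFAE
      [IsArtinianRing R,
       LeftSemiartinian R ∨ LeftSemiartinian Rᵐᵒᵖ,
       Semiregular R,
       Semiperfect R,
       EssentialSub R (socle R R)] := by
  have := h1
  tfae_have 1 → 2 := fun h => Or.inl aux_art_semiart
  tfae_have 2 → 1 := by
    rintro (h | h)
    · exact aux_semiart_art h
    · exact aux_right_art h2 h
  tfae_have 1 → 4 := fun h => aux_art_semiperf
  tfae_have 4 → 3 := fun h => aux_ss_semireg h.1
  tfae_have 3 → 1 := fun h => aux_ss_art h2 (aux_semireg_ss h)
  tfae_have 1 → 5 := fun h => aux_semiart_ess aux_art_semiart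
  tfae_have 5 → 1 := fun h => aux_semiart_art (aux_ess_semiart h2 h)
  tfae_finish
end
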